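/- Correctness of the recursive classical–quantum adder (Figure 8): let n, m, x, c : ℕ with m ≤ n, x < 2^n and c < 2^n. Write x_L = x % 2^m, x_H = x / 2^m, c_L = c % 2^m, c_H = c / 2^m, and let carry = if 2^m ≤ x_L + c_L then 1 else 0. Then (x + c) % 2^n = 2^m * ((x_H + c_H + carry) % 2^(n−m)) + (x_L + c_L) % 2^m. That is, adding the constant c to an n-bit register splits into adding c_L to the low m bits, computing the carry x_L + c_L ≥ 2^m (equivalently x_L ≥ 2^m − c_L), and adding c_H plus the carry to the high n − m bits. -/

import Mathlib

theorem classical_quantum_adder_recursive_general {a : ℕ} (ha : 0 < a) (b x c : ℕ) :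
    (x + c) % (a * b) =
      a * ((x / a + c / a + (if a ≤ x % a + c % a then 1 else 0)) % b) +
        (x % a + c % a) % a :=
  calc
    (x + c) % (a * b) = a * ((x + c) / a % b) + (x + c) % a := by
      rw [Nat.mod_mul, Nat.add_comm]
    _ = a * ((x / a + c / a + (if a ≤ x % a + c % a then 1 else 0)) % b) + (x + c) % a := by
      rw [Nat.add_div ha]
    _ = a * ((x / a + c / a + (if a ≤ x % a + c % a then 1 else 0)) % b) +
          (x % a + c % a) % a := by
      rw [Nat.add_mod x c a]

/-- **Correctness of the recursive classical–quantum adder (Figure 8).**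
Adding the constant `c` to an `n`-bit register holding `x` splits into adding the low
part `c_L` to the low `m` bits, computing the carry `x_L + c_L ≥ 2^m`, and adding the
high part `c_H` plus the carry to the high `n - m` bits. -/
theorem classical_quantum_adder_recursive (n m x c : ℕ) (hm : m ≤ n)
    (hx : x < 2 ^ n) (hc : c < 2 ^ n) :
    (x + c) % 2 ^ n =
      2 ^ m * ((x / 2 ^ m + c / 2 ^ m +
          (if 2 ^ m ≤ x % 2 ^ m + c % 2 ^ m then 1 else 0)) % 2 ^ (n - m)) +
        (x % 2 ^ m + c % 2 ^ m) % 2 ^ m := by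
  rw [← pow_mul_pow_sub 2 hm]
  exact classical_quantum_adder_recursive_general (Nat.two_pow_pos m) (2 ^ (n - m)) x c
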